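/- Let n ≥ 2 and 1 ≤ k ≤ n−1, and let T be a Cayley tree labelled with [n]_0. Then the set of children of the root of T is exactly {1,…,k} if and only if the word blob(T)(1) blob(T)(2) ⋯ blob(T)(n−1) satisfies 0^{k−1}1^{n−k} ≤ blob(T) ≤ 0^{k−1} k n^{n−k−1} in the lexicographic order on words over the alphabet {0,1,…,n} (equivalently: blob(T)(i) = 0 for i ≤ k−1, 1 ≤ blob(T)(k) ≤ k, and blob(T)(i) ≥ 1 for i ≥ k+1). Consequently, the number of Cayley trees labelled with [n]_0 whose set of children of the root is exactly {1,…,k} equals k·n^{n−k−1}. -/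

import Mathlib

/-!
Call `i` a weak record of a self-map `g` if no iterate of `g` takes `i` above itself. For a tree
these are `0`, the records, and all numbers beyond `n`; for a code the notion still makes sense
although its functional graph may have cycles. Let `σ` send each weak record of `f` to the
next one and fix all other vertices. It is a bijection from `ℕ` onto the positive integers, and the
record code of a tree `f` is `b = f ∘ σ`.

Changing a map only at its weak records `r`, and so that the orbit of the new value of `r` stays
below `r`, does not change the set of weak records. Hence `b` and `f` have the same weak records,
so `b` determines `σ`, and with it `f = b ∘ σ⁻¹` on the positive integers: the code is a bijection
from trees onto words.

If `k` is a weak record, then `σ` maps `{j | j < k}` onto `{1,…,k}`, so that the root has children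
`1,…,k` exactly if the zeros of `b` below `n` are the `j < k`. Either description of the tree makes
`k` a weak record, and conversely `b k ≤ k` holds at every weak record.
-/

open scoped Classical

namespace WearyParking

/-- `f` is the parent function of a Cayley tree on `{0,…,n}` rooted at `0`:
`f 0 = 0`, `f` is pinned to `0` outside `{1,…,n}`, `f` maps `{1,…,n}` into `{0,…,n}`,
and every vertex reaches the root under iteration. -/
def IsCayleyTree (n : ℕ) (f : ℕ → ℕ) : Prop :=
  f 0 = 0 ∧ (∀ i, n < i → f i = 0) ∧
  (∀ i, 1 ≤ i → i ≤ n → f i ≤ n) ∧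
  (∀ i, 1 ≤ i → i ≤ n → ∃ k, f^[k] i = 0)

/-- A non-root vertex `i` is a record of the tree if it is greater than
all of its ancestors. -/
def IsRecord (n : ℕ) (f : ℕ → ℕ) (i : ℕ) : Prop :=
  1 ≤ i ∧ i ≤ n ∧ ∀ k, 1 ≤ k → f^[k] i < i

/-- The smallest record larger than `i`. -/
noncomputable def nextRecord (n : ℕ) (f : ℕ → ℕ) (i : ℕ) : ℕ :=
  sInf {j | IsRecord n f j ∧ i < j}

/-- The record (blob) code of the tree, a function on `{1,…,n-1}`:
at a non-record position it records the parent, and at a record position it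
records the parent of the next record. -/
noncomputable def blob (n : ℕ) (f : ℕ → ℕ) (i : ℕ) : ℕ :=
  if IsRecord n f i then f (nextRecord n f i) else f i

/-- Number of children of vertex `v` in the tree. -/
def numChildren (n : ℕ) (f : ℕ → ℕ) (v : ℕ) : ℕ :=
  ((Finset.Icc 1 n).filter fun i => f i = v).card

/-- The list of the first `i+1` vertices visited by the priority-first search:
start at the root `0`; at each step visit the smallest unvisited vertex whose
parent has been visited. -/
noncomputable def wearyList (n : ℕ) (f : ℕ → ℕ) : ℕ → List ℕ
  | 0 => [0]
  | (i + 1) =>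
      wearyList n f i ++
        [sInf {v | 1 ≤ v ∧ v ≤ n ∧ v ∉ wearyList n f i ∧ f v ∈ wearyList n f i}]

/-- The weary permutation of the tree: `weary n f i` is the `i`-th vertex visited
by the priority-first search (with `weary n f 0 = 0`). -/
noncomputable def weary (n : ℕ) (f : ℕ → ℕ) (i : ℕ) : ℕ :=
  (wearyList n f n).getD i 0

/-- The inverse of the weary permutation. -/
noncomputable def wearyInv (n : ℕ) (f : ℕ → ℕ) (v : ℕ) : ℕ :=
  sInf {i | weary n f i = v}

/-- The preference sequence `π_T` of the tree: `π_T i = ω_T⁻¹ (f_T i) + 1`. -/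
noncomputable def pref (n : ℕ) (f : ℕ → ℕ) (i : ℕ) : ℕ :=
  wearyInv n f (f i) + 1

/-- Parent function of the priority tree `pt(T)`: `ω_T⁻¹ ∘ f_T ∘ ω_T`. -/
noncomputable def prioParent (n : ℕ) (f : ℕ → ℕ) (i : ℕ) : ℕ :=
  wearyInv n f (f (weary n f i))

/-- The list of spots occupied by cars `1,…,c` in the classical parking process:
car `c` parks at the first spot `≥ π c` not occupied by an earlier car. -/
noncomputable def spotList (π : ℕ → ℕ) : ℕ → List ℕ
  | 0 => []
  | (c + 1) => spotList π c ++ [sInf {s | π (c + 1) ≤ s ∧ s ∉ spotList π c}]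

/-- The spot where car `c` ends up in the classical parking process. -/
noncomputable def spot (π : ℕ → ℕ) (c : ℕ) : ℕ :=
  (spotList π c).getD (c - 1) 0

/-- `π` is a parking function of length `n`: preferences lie in `{1,…,n}`
(pinned to `1` outside `{1,…,n}`) and every car parks within the `n` spots. -/
def IsParkingFun (n : ℕ) (π : ℕ → ℕ) : Prop :=
  (∀ c, 1 ≤ c → c ≤ n → 1 ≤ π c ∧ π c ≤ n) ∧
  (∀ c, c = 0 ∨ n < c → π c = 1) ∧
  (∀ c, 1 ≤ c → c ≤ n → spot π c ≤ n)

/-- The bird's-eye permutation `ω_π`: the car parked at spot `i` (and `0` at `0`). -/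
noncomputable def birdsEye (n : ℕ) (π : ℕ → ℕ) (i : ℕ) : ℕ :=
  if i = 0 then 0 else sInf {c | 1 ≤ c ∧ c ≤ n ∧ spot π c = i}

/-- The inverse of the bird's-eye permutation. -/
noncomputable def birdsEyeInv (n : ℕ) (π : ℕ → ℕ) (c : ℕ) : ℕ :=
  sInf {i | birdsEye n π i = c}

/-- Parent function of the parking tree `PT(π)`: `f_π i = ω_π (π i - 1)`. -/
noncomputable def ptParent (n : ℕ) (π : ℕ → ℕ) (i : ℕ) : ℕ :=
  if 1 ≤ i ∧ i ≤ n then birdsEye n π (π i - 1) else 0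

/-- `v` is a record of the parking function `π`, i.e. a left-to-right maximum of
the word `ω_π(1) ω_π(2) ⋯ ω_π(n)`. -/
def IsPfRecord (n : ℕ) (π : ℕ → ℕ) (v : ℕ) : Prop :=
  ∃ i, 1 ≤ i ∧ i ≤ n ∧ birdsEye n π i = v ∧ ∀ j, 1 ≤ j → j < i → birdsEye n π j < v

/-- The waiting time of the tree: `wait T = Σ_{i=1}^n (i - f_{pt(T)}(i))`. -/
noncomputable def wait (n : ℕ) (f : ℕ → ℕ) : ℕ :=
  ∑ i ∈ Finset.Icc 1 n, (i - prioParent n f i)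

/-- The number of priority small ascents of the tree. -/
noncomputable def psa (n : ℕ) (f : ℕ → ℕ) : ℕ :=
  ((Finset.Icc 1 n).filter fun i => prioParent n f i = i - 1).card

/-- The number of children of the root. -/
def degRoot (n : ℕ) (f : ℕ → ℕ) : ℕ := numChildren n f 0

/-- The children sequence: `chseq n f j` is the number of vertices with exactly
`j` children. -/
def chseq (n : ℕ) (f : ℕ → ℕ) (j : ℕ) : ℕ :=
  ((Finset.Icc 0 n).filter fun v => numChildren n f v = j).card

/-- The number of probes of the parking function: `n` plus the total displacement. -/
noncomputable def probes (n : ℕ) (π : ℕ → ℕ) : ℕ :=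
  n + ∑ c ∈ Finset.Icc 1 n, (spot π c - π c)

/-- The number of lucky cars of `π`: cars parking at their preferred spot. -/
noncomputable def lucky (n : ℕ) (π : ℕ → ℕ) : ℕ :=
  ((Finset.Icc 1 n).filter fun c => spot π c = π c).card

/-- The number of `1`s in `π`. -/
def ones (n : ℕ) (π : ℕ → ℕ) : ℕ :=
  ((Finset.Icc 1 n).filter fun c => π c = 1).card

/-- The multiplicity of the value `v` in the parking function `π`. -/
def multIn (n : ℕ) (π : ℕ → ℕ) (v : ℕ) : ℕ :=
  ((Finset.Icc 1 n).filter fun c => π c = v).card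

/-- The multiplicity sequence: `multSeq n π j` is the number of values in
`{1,…,n+1}` appearing exactly `j` times in `π`. -/
def multSeq (n : ℕ) (π : ℕ → ℕ) (j : ℕ) : ℕ :=
  ((Finset.Icc 1 (n + 1)).filter fun v => multIn n π v = j).card

/-- The tree is a path graph with endpoints `0` and `n`: every vertex has at most
one child and `n` is the (unique) leaf. -/
def IsPathTree (n : ℕ) (f : ℕ → ℕ) : Prop :=
  (∀ v, v ≤ n → numChildren n f v ≤ 1) ∧ numChildren n f n = 0

/-- `g` is the parent map of a rooted forest on `{1,…,n}` rooted at `{1,…,k}`: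
the vertices `1,…,k` are roots (fixed points), every other vertex of `{1,…,n}` has a
parent in `{1,…,n}`, every vertex reaches one of the roots under iteration, and `g`
is pinned to `0` outside `{1,…,n}`. -/
def IsForestRootedAt (n k : ℕ) (g : ℕ → ℕ) : Prop :=
  (∀ i, 1 ≤ i → i ≤ k → g i = i) ∧
  (∀ i, k < i → i ≤ n → 1 ≤ g i ∧ g i ≤ n) ∧
  (∀ i, 1 ≤ i → i ≤ n → ∃ m, 1 ≤ g^[m] i ∧ g^[m] i ≤ k) ∧
  (∀ i, i = 0 ∨ n < i → g i = 0)

/-! ### Weak records -/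

section WeakRecords

variable {α : Type*} [Preorder α] {g h : α → α}

/-- The weak records of a self-map: the points that no iterate of the map takes above themselves.
For the parent function of a tree on `{0,…,n}` these are the root, the records, and, because the
parent function is extended by `0`, all numbers beyond `n`. Unlike `IsRecord`, the notion is also
meant for codes, whose functional graphs may have cycles. -/
def weakRecords (g : α → α) : Set α := {i | ∀ k, g^[k] i ≤ i}

theorem mem_weakRecords_of_forall_le {n i : α} (hg : ∀ v, g v ≤ n) (hi : n ≤ i) :
    i ∈ weakRecords g
  | 0 => le_rfl
  | k + 1 => by
    rw [Function.iterate_succ_apply']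
    exact (hg _).trans hi

theorem mem_weakRecords_of_apply_eq_self {i : α} (hi : g i = i) : i ∈ weakRecords g :=
  fun k => (Function.iterate_fixed hi k).le

theorem mem_weakRecords_of_apply_mem {i : α} (hle : g i ≤ i) (hi : g i ∈ weakRecords g) :
    i ∈ weakRecords g
  | 0 => le_rfl
  | k + 1 => (hi k).trans hle

theorem iterate_le_of_eqOn_compl_weakRecords (hoff : Set.EqOn h g (weakRecords g)ᶜ)
    (hon : ∀ r ∈ weakRecords g, ∀ k, g^[k] (h r) ≤ r) {v p : α} (hv : ∀ k, g^[k] v ≤ p) (k : ℕ) :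
    h^[k] v ≤ p := by
  induction k generalizing v with
  | zero => exact hv 0
  | succ _ ih =>
    refine ih fun j => ?_
    by_cases hr : v ∈ weakRecords g
    · exact (hon v hr j).trans (hv 0)
    · rw [hoff hr]
      exact hv (j + 1)

/-- Before the orbit of `i` first rises above `i` it meets no weak record, so the two maps agree
up to that point. -/
theorem weakRecords_eq_of_eqOn_compl (hoff : Set.EqOn h g (weakRecords g)ᶜ)
    (hon : ∀ r ∈ weakRecords g, ∀ k, g^[k] (h r) ≤ r) : weakRecords h = weakRecords g := by
  refine Set.Subset.antisymm (fun i hi => ?_)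
    fun i hi => iterate_le_of_eqOn_compl_weakRecords hoff hon hi
  by_contra hig
  obtain ⟨t, ht, hmin⟩ : ∃ t, ¬ g^[t] i ≤ i ∧ ∀ s < t, g^[s] i ≤ i := by
    have hex : ∃ t, ¬ g^[t] i ≤ i := not_forall.1 hig
    exact ⟨Nat.find hex, Nat.find_spec hex, fun s hs => not_not.1 (Nat.find_min hex hs)⟩
  have hmem : ∀ s < t, g^[s] i ∉ weakRecords g := fun s hs hrec => by
    have hle := hrec (t - s)
    rw [← Function.iterate_add_apply, Nat.sub_add_cancel hs.le] at hle
    exact ht (hle.trans (hmin s hs))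
  have heq : ∀ s ≤ t, h^[s] i = g^[s] i := fun s hs => by
    induction s with
    | zero => rfl
    | succ s ih =>
      rw [Function.iterate_succ_apply', Function.iterate_succ_apply', ih (by omega),
        hoff (hmem s hs)]
  exact ht (heq t le_rfl ▸ hi t)

end WeakRecords

section BoundedMap

variable {g : ℕ → ℕ}

theorem mem_weakRecords_of_apply_eq_zero (h0 : g 0 = 0) {i : ℕ} (hi : g i = 0) :
    i ∈ weakRecords g :=
  mem_weakRecords_of_apply_mem (hi.trans_le i.zero_le)
    (hi.symm ▸ mem_weakRecords_of_apply_eq_self h0)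

theorem infinite_weakRecords (hg : BddAbove (Set.range g)) : (weakRecords g).Infinite := by
  obtain ⟨n, hn⟩ := hg
  exact (Set.Ici_infinite n).mono fun i hi =>
    mem_weakRecords_of_forall_le (fun v => hn (Set.mem_range_self v)) hi

theorem exists_iterate_max (hg : BddAbove (Set.range g)) (v : ℕ) :
    ∃ t, (∀ s, g^[s] v ≤ g^[t] v) ∧ g^[t] v ∈ weakRecords g := by
  have hbdd : BddAbove (Set.range fun s => g^[s] v) := by
    refine (hg.insert v).mono ?_
    rintro _ ⟨_ | s, rfl⟩
    · exact Set.mem_insert v _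
    · exact Set.mem_insert_of_mem _ ⟨g^[s] v, (Function.iterate_succ_apply' g s v).symm⟩
  obtain ⟨_, ⟨t, rfl⟩, ht⟩ := hbdd.exists_isGreatest_of_nonempty (Set.range_nonempty _)
  refine ⟨t, fun s => ht ⟨s, rfl⟩, fun k => ?_⟩
  rw [← Function.iterate_add_apply]
  exact ht ⟨k + t, rfl⟩

theorem iterate_apply_lt_of_mem_weakRecords (h0 : g 0 = 0) {r m : ℕ} (hm : g^[m] r = 0)
    (hr : r ∈ weakRecords g) (hr0 : r ≠ 0) (k : ℕ) : g^[k] (g r) < r := by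
  refine (hr (k + 1)).lt_of_ne fun hcycle => hr0 ?_
  have hfix : g^[(k + 1) * m] r = r := by
    rw [Function.iterate_mul]
    exact Function.iterate_fixed hcycle m
  rw [← hfix, ← Nat.sub_add_cancel (Nat.le_mul_of_pos_left m k.succ_pos),
    Function.iterate_add_apply, hm, Function.iterate_fixed h0]

theorem exists_iterate_eq_zero (hg : BddAbove (Set.range g))
    (hlt : ∀ r ∈ weakRecords g, r ≠ 0 → ∀ k, g^[k] (g r) < r) (v : ℕ) : ∃ k, g^[k] v = 0 := by
  obtain ⟨t, -, hrec⟩ := exists_iterate_max hg v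
  induction hM : g^[t] v using Nat.strong_induction_on generalizing v t with
  | h M ih =>
    by_cases hM0 : M = 0
    · exact ⟨t, hM.trans hM0⟩
    obtain ⟨s, -, hs⟩ := exists_iterate_max hg (g M)
    obtain ⟨k, hk⟩ := ih _ (hlt M (hM ▸ hrec) hM0 s) (g M) s hs rfl
    refine ⟨k + (t + 1), ?_⟩
    rw [Function.iterate_add_apply, Function.iterate_succ_apply', hM, hk]

end BoundedMap

/-! ### Advancing to the next element of a set -/

section Advance

variable {A : Set ℕ} {i j : ℕ}

/-- The map moving each element of `A` to the next element of `A` and fixing all other numbers.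
The record code of a tree is its parent function composed with this map for the weak records.
If `A` has no element beyond `i ∈ A`, the value at `i` is the junk value `sInf ∅ = 0`. -/
noncomputable def advance (A : Set ℕ) (i : ℕ) : ℕ :=
  if i ∈ A then sInf {j | j ∈ A ∧ i < j} else i

theorem advance_of_notMem (hi : i ∉ A) : advance A i = i := if_neg hi

theorem advance_mem_and_lt (hA : A.Infinite) (hi : i ∈ A) :
    advance A i ∈ A ∧ i < advance A i := by
  rw [advance, if_pos hi]
  exact Nat.sInf_mem (s := {j | j ∈ A ∧ i < j}) (hA.exists_gt i)

theorem advance_mem_iff (hA : A.Infinite) : advance A i ∈ A ↔ i ∈ A := by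
  refine ⟨fun h => ?_, fun hi => (advance_mem_and_lt hA hi).1⟩
  by_contra hi
  exact hi (advance_of_notMem hi ▸ h)

theorem advance_le_iff (hA : A.Infinite) (hj : j ∈ A) : advance A i ≤ j ↔ i < j := by
  by_cases hi : i ∈ A
  · refine ⟨(advance_mem_and_lt hA hi).2.trans_le, fun hij => ?_⟩
    rw [advance, if_pos hi]
    exact Nat.sInf_le ⟨hj, hij⟩
  · rw [advance_of_notMem hi]
    exact (ne_of_mem_of_not_mem hj hi).symm.le_iff_lt

theorem advance_injective (hA : A.Infinite) : Function.Injective (advance A) := by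
  intro i j hij
  have hmem : i ∈ A ↔ j ∈ A := by rw [← advance_mem_iff hA, hij, advance_mem_iff hA]
  by_cases hi : i ∈ A
  · have key : ∀ r ∈ A, i < r ↔ j < r := fun r hr => by
      rw [← advance_le_iff hA hr, hij, advance_le_iff hA hr]
    have hj_not_lt := (key i hi).not.1 (lt_irrefl i)
    have hi_not_lt := (key j (hmem.1 hi)).not.2 (lt_irrefl j)
    exact le_antisymm (not_lt.1 hj_not_lt) (not_lt.1 hi_not_lt)
  · rwa [advance_of_notMem hi, advance_of_notMem (hmem.not.1 hi)] at hij

theorem advance_ne_zero (hA : A.Infinite) (h0 : 0 ∈ A) (i : ℕ) : advance A i ≠ 0 :=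
  fun h => Nat.not_lt_zero i ((advance_le_iff hA h0).1 h.le)

theorem exists_advance_eq (hA : A.Infinite) (h0 : 0 ∈ A) (hi0 : i ≠ 0) :
    ∃ j, advance A j = i := by
  by_cases hi : i ∈ A
  · obtain ⟨j, ⟨hjA, hji⟩, hmax⟩ :=
      (bddAbove_Iio.mono Set.inter_subset_right : BddAbove (A ∩ Set.Iio i))
        |>.exists_isGreatest_of_nonempty ⟨0, h0, Nat.pos_of_ne_zero hi0⟩
    obtain ⟨hmem, hlt⟩ := advance_mem_and_lt hA hjA
    refine ⟨j, ((advance_le_iff hA hi).2 hji).antisymm ?_⟩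
    exact not_lt.1 fun h => (hmax ⟨hmem, h⟩).not_gt hlt
  · exact ⟨i, advance_of_notMem hi⟩

end Advance

/-! ### The record code of a tree -/

namespace IsCayleyTree

variable {n : ℕ} {f : ℕ → ℕ}

theorem apply_le (hf : IsCayleyTree n f) (v : ℕ) : f v ≤ n := by
  obtain ⟨h0, hout, hle, -⟩ := hf
  rcases Nat.eq_zero_or_pos v with rfl | hv
  · exact h0.trans_le n.zero_le
  · rcases le_or_gt v n with hvn | hvn
    · exact hle v hv hvn
    · exact (hout v hvn).trans_le n.zero_le

theorem bddAbove_range (hf : IsCayleyTree n f) : BddAbove (Set.range f) :=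
  ⟨n, Set.forall_mem_range.2 hf.apply_le⟩

theorem zero_mem_weakRecords (hf : IsCayleyTree n f) : 0 ∈ weakRecords f :=
  mem_weakRecords_of_apply_eq_self hf.1

theorem mem_weakRecords_of_le (hf : IsCayleyTree n f) {i : ℕ} (hi : n ≤ i) :
    i ∈ weakRecords f :=
  mem_weakRecords_of_forall_le hf.apply_le hi

theorem exists_iterate_eq_zero (hf : IsCayleyTree n f) (v : ℕ) : ∃ m, f^[m] v = 0 := by
  rcases Nat.eq_zero_or_pos v with rfl | hv
  · exact ⟨0, rfl⟩
  · rcases le_or_gt v n with hvn | hvn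
    · exact hf.2.2.2 v hv hvn
    · exact ⟨1, hf.2.1 v hvn⟩

theorem iterate_parent_lt (hf : IsCayleyTree n f) {r : ℕ} (hr : r ∈ weakRecords f)
    (hr0 : r ≠ 0) (k : ℕ) : f^[k] (f r) < r :=
  iterate_apply_lt_of_mem_weakRecords hf.1 (hf.exists_iterate_eq_zero r).choose_spec hr hr0 k

theorem isRecord_iff (hf : IsCayleyTree n f) {i : ℕ} :
    IsRecord n f i ↔ 1 ≤ i ∧ i ≤ n ∧ i ∈ weakRecords f := by
  refine and_congr_right fun h1 => and_congr_right fun _ => ⟨fun hi k => ?_, fun hi k hk => ?_⟩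
  · rcases Nat.eq_zero_or_pos k with rfl | hk
    · exact le_rfl
    · exact (hi k hk).le
  · obtain ⟨k, rfl⟩ := Nat.exists_eq_add_of_le' hk
    exact hf.iterate_parent_lt hi (by omega) k

/-- The maximum of the proper ancestors of a record is a weak record, hence at most the record
before it. -/
theorem iterate_advance_le (hf : IsCayleyTree n f) {r : ℕ} (hr : r ∈ weakRecords f) (k : ℕ) :
    f^[k] (f (advance (weakRecords f) r)) ≤ r := by
  have hinf := infinite_weakRecords hf.bddAbove_range
  obtain ⟨hmem, hlt⟩ := advance_mem_and_lt hinf hr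
  obtain ⟨t, hmax, hrec⟩ := exists_iterate_max hf.bddAbove_range (f (advance (weakRecords f) r))
  have hbelow := hf.iterate_parent_lt hmem (by omega) t
  exact (hmax k).trans (not_lt.1 ((advance_le_iff hinf hrec).not.1 hbelow.not_ge))

theorem nextRecord_eq_advance (hf : IsCayleyTree n f) {i : ℕ} (hi : i ∈ weakRecords f)
    (hin : i < n) : nextRecord n f i = advance (weakRecords f) i := by
  have hinf := infinite_weakRecords hf.bddAbove_range
  obtain ⟨hmem, hlt⟩ := advance_mem_and_lt hinf hi
  have hle := (advance_le_iff hinf (hf.mem_weakRecords_of_le le_rfl)).2 hin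
  refine IsLeast.csInf_eq ⟨⟨hf.isRecord_iff.2 ⟨by omega, hle, hmem⟩, hlt⟩, ?_⟩
  rintro j ⟨hj, hij⟩
  exact (advance_le_iff hinf (hf.isRecord_iff.1 hj).2.2).2 hij

theorem blob_zero (hf : IsCayleyTree n f) : blob n f 0 = 0 := by
  rw [blob, if_neg fun h => Nat.not_succ_le_zero 0 h.1, hf.1]

theorem blob_apply_of_le (hf : IsCayleyTree n f) {i : ℕ} (hi : n ≤ i) : blob n f i = 0 := by
  have hnone : {j | IsRecord n f j ∧ i < j} = ∅ :=
    Set.eq_empty_of_forall_notMem fun j hj => (hj.1.2.1.trans hi).not_gt hj.2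
  rw [blob, nextRecord, hnone, Nat.sInf_empty, hf.1]
  refine ite_eq_left_iff.2 fun hrec => ?_
  rcases Nat.eq_zero_or_pos i with rfl | hi0
  · exact hf.1
  · exact hf.2.1 i (hi.lt_of_ne fun hni =>
      hrec (hf.isRecord_iff.2 ⟨hi0, hni.ge, hf.mem_weakRecords_of_le hi⟩))

theorem blob_eq_comp_advance (hf : IsCayleyTree n f) :
    blob n f = f ∘ advance (weakRecords f) := by
  funext i
  rw [Function.comp_apply]
  rcases le_or_gt n i with hni | hin
  · have hlt := (advance_mem_and_lt (infinite_weakRecords hf.bddAbove_range)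
      (hf.mem_weakRecords_of_le hni)).2
    rw [hf.blob_apply_of_le hni, hf.2.1 _ (hni.trans_lt hlt)]
  · rcases Nat.eq_zero_or_pos i with rfl | hi
    · rw [hf.blob_zero]
      exact (Nat.le_zero.1 (hf.iterate_advance_le hf.zero_mem_weakRecords 0)).symm
    · by_cases hrec : i ∈ weakRecords f
      · rw [blob, if_pos (hf.isRecord_iff.2 ⟨hi, hin.le, hrec⟩),
          hf.nextRecord_eq_advance hrec hin]
      · rw [blob, if_neg fun h => hrec (hf.isRecord_iff.1 h).2.2, advance_of_notMem hrec]

theorem weakRecords_blob (hf : IsCayleyTree n f) : weakRecords (blob n f) = weakRecords f := by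
  rw [hf.blob_eq_comp_advance]
  exact weakRecords_eq_of_eqOn_compl (fun i hi => congrArg f (advance_of_notMem hi))
    fun r hr => hf.iterate_advance_le hr

end IsCayleyTree

/-! ### The record code is a bijection -/

/-- The words of length `n - 1` over `{0,…,n}`, as functions on `ℕ` whose values at `1,…,n-1` are
the letters and whose other values are `0`. These are the possible record codes. -/
def IsCode (n : ℕ) (b : ℕ → ℕ) : Prop :=
  b 0 = 0 ∧ (∀ i, n ≤ i → b i = 0) ∧ ∀ i, b i ≤ n

/-- The inverse of the record code. Writing `σ` for `advance (weakRecords b)`, it sends `σ j` to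
`b j`, and the only number outside the range of `σ`, namely `0`, to `0`. -/
noncomputable def unblob (b : ℕ → ℕ) : ℕ → ℕ :=
  Function.extend (advance (weakRecords b)) b (0 : ℕ → ℕ)

namespace IsCode

variable {n : ℕ} {b : ℕ → ℕ}

theorem bddAbove_range (hb : IsCode n b) : BddAbove (Set.range b) :=
  ⟨n, Set.forall_mem_range.2 hb.2.2⟩

theorem zero_mem_weakRecords (hb : IsCode n b) : 0 ∈ weakRecords b :=
  mem_weakRecords_of_apply_eq_self hb.1

theorem unblob_advance (hb : IsCode n b) (i : ℕ) :
    unblob b (advance (weakRecords b) i) = b i :=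
  (advance_injective (infinite_weakRecords hb.bddAbove_range)).extend_apply b _ i

theorem unblob_zero (hb : IsCode n b) : unblob b 0 = 0 :=
  Function.extend_apply' b _ 0 fun ⟨i, hi⟩ =>
    advance_ne_zero (infinite_weakRecords hb.bddAbove_range) hb.zero_mem_weakRecords i hi

theorem unblob_of_notMem (hb : IsCode n b) {i : ℕ} (hi : i ∉ weakRecords b) :
    unblob b i = b i := by
  rw [← hb.unblob_advance i, advance_of_notMem hi]

theorem unblob_le (hb : IsCode n b) (i : ℕ) : unblob b i ≤ n := by
  rcases eq_or_ne i 0 with rfl | hi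
  · exact hb.unblob_zero.trans_le n.zero_le
  · obtain ⟨j, rfl⟩ := exists_advance_eq (infinite_weakRecords hb.bddAbove_range)
      hb.zero_mem_weakRecords hi
    exact (hb.unblob_advance j).trans_le (hb.2.2 j)

theorem unblob_of_lt (hb : IsCode n b) {i : ℕ} (hi : n < i) : unblob b i = 0 := by
  have hinf := infinite_weakRecords hb.bddAbove_range
  obtain ⟨j, rfl⟩ := exists_advance_eq hinf hb.zero_mem_weakRecords (by omega : i ≠ 0)
  have hn := mem_weakRecords_of_forall_le hb.2.2 le_rfl
  rw [hb.unblob_advance]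
  exact hb.2.1 j (not_lt.1 ((advance_le_iff hinf hn).not.1 hi.not_ge))

theorem iterate_unblob_lt (hb : IsCode n b) {r : ℕ} (hr : r ∈ weakRecords b) (hr0 : r ≠ 0)
    (k : ℕ) : b^[k] (unblob b r) < r := by
  have hinf := infinite_weakRecords hb.bddAbove_range
  obtain ⟨j, rfl⟩ := exists_advance_eq hinf hb.zero_mem_weakRecords hr0
  have hj := (advance_mem_iff hinf).1 hr
  rw [hb.unblob_advance]
  exact (hj (k + 1)).trans_lt (advance_mem_and_lt hinf hj).2

theorem iterate_unblob_le (hb : IsCode n b) {r : ℕ} (hr : r ∈ weakRecords b) (k : ℕ) :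
    b^[k] (unblob b r) ≤ r := by
  rcases eq_or_ne r 0 with rfl | hr0
  · rw [hb.unblob_zero, Function.iterate_fixed hb.1]
  · exact (hb.iterate_unblob_lt hr hr0 k).le

theorem weakRecords_unblob (hb : IsCode n b) : weakRecords (unblob b) = weakRecords b :=
  weakRecords_eq_of_eqOn_compl (fun _ => hb.unblob_of_notMem) fun _ => hb.iterate_unblob_le

theorem isCayleyTree_unblob (hb : IsCode n b) : IsCayleyTree n (unblob b) := by
  refine ⟨hb.unblob_zero, fun _ => hb.unblob_of_lt, fun i _ _ => hb.unblob_le i, fun i _ _ => ?_⟩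
  refine exists_iterate_eq_zero ⟨n, Set.forall_mem_range.2 hb.unblob_le⟩ (fun r hr hr0 k => ?_) i
  rw [hb.weakRecords_unblob] at hr
  have hbound := iterate_le_of_eqOn_compl_weakRecords (fun _ => hb.unblob_of_notMem)
    (fun _ => hb.iterate_unblob_le) (fun m => Nat.le_sub_one_of_lt (hb.iterate_unblob_lt hr hr0 m))
  exact Nat.lt_of_le_sub_one (Nat.pos_of_ne_zero hr0) (hbound k)

theorem blob_unblob (hb : IsCode n b) : blob n (unblob b) = b := by
  rw [hb.isCayleyTree_unblob.blob_eq_comp_advance, hb.weakRecords_unblob]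
  exact funext hb.unblob_advance

end IsCode

theorem IsCayleyTree.isCode_blob {n : ℕ} {f : ℕ → ℕ} (hf : IsCayleyTree n f) :
    IsCode n (blob n f) := by
  refine ⟨hf.blob_zero, fun _ => hf.blob_apply_of_le, fun i => ?_⟩
  rw [hf.blob_eq_comp_advance]
  exact hf.apply_le _

theorem blob_injOn (n : ℕ) : Set.InjOn (blob n) {f | IsCayleyTree n f} := by
  intro f hf g hg hfg
  have hrec : weakRecords f = weakRecords g := by
    rw [← hf.weakRecords_blob, hfg, hg.weakRecords_blob]
  funext i
  rcases eq_or_ne i 0 with rfl | hi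
  · exact hf.1.trans hg.1.symm
  · obtain ⟨j, rfl⟩ := exists_advance_eq (infinite_weakRecords hf.bddAbove_range)
      hf.zero_mem_weakRecords hi
    have hj := congrFun hfg j
    rwa [hf.blob_eq_comp_advance, hg.blob_eq_comp_advance, ← hrec] at hj

theorem blob_bijOn (n : ℕ) : Set.BijOn (blob n) {f | IsCayleyTree n f} {b | IsCode n b} :=
  ⟨fun _ hf => hf.isCode_blob, blob_injOn n,
    fun b hb => ⟨unblob b, hb.isCayleyTree_unblob, hb.blob_unblob⟩⟩

/-! ### The children of the root -/

/-- The codes of the trees whose root has children `1,…,k`, that is, those between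
`0^{k-1}1^{n-k}` and `0^{k-1}k n^{n-k-1}`: the zeros at positions below `n` are those below `k`,
and the letter at `k` is at most `k`. -/
def codeInterval (n k : ℕ) : Set (ℕ → ℕ) :=
  {b | IsCode n b ∧ (∀ i < n, b i = 0 ↔ i < k) ∧ b k ≤ k}

theorem mem_codeInterval_iff {n k : ℕ} {b : ℕ → ℕ} (hb : IsCode n b) (hkn : k < n) :
    b ∈ codeInterval n k ↔ (∀ i, 1 ≤ i → i ≤ k - 1 → b i = 0) ∧ (1 ≤ b k ∧ b k ≤ k) ∧
      ∀ i, k + 1 ≤ i → i ≤ n - 1 → 1 ≤ b i := by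
  have h0 := hb.1
  simp only [codeInterval, Set.mem_ofPred_eq, hb, true_and]
  grind

theorem IsCayleyTree.children_iff_zeros_blob {n k : ℕ} {f : ℕ → ℕ} (hf : IsCayleyTree n f)
    (hk : k ∈ weakRecords f) :
    (∀ i, 1 ≤ i → i ≤ n → (f i = 0 ↔ i ≤ k)) ↔ ∀ i < n, blob n f i = 0 ↔ i < k := by
  have hinf := infinite_weakRecords hf.bddAbove_range
  have hn := hf.mem_weakRecords_of_le le_rfl
  have hb := hf.blob_eq_comp_advance
  refine ⟨fun h i hi => ?_, fun h i hi hin => ?_⟩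
  · rw [hb, Function.comp_apply, ← advance_le_iff hinf hk]
    exact h _ (Nat.pos_of_ne_zero (advance_ne_zero hinf hf.zero_mem_weakRecords i))
      ((advance_le_iff hinf hn).2 hi)
  · obtain ⟨j, rfl⟩ := exists_advance_eq hinf hf.zero_mem_weakRecords (by omega : i ≠ 0)
    rw [advance_le_iff hinf hk, ← h j ((advance_le_iff hinf hn).1 hin), hb, Function.comp_apply]

theorem IsCayleyTree.children_iff_blob_mem_codeInterval {n k : ℕ} {f : ℕ → ℕ}
    (hf : IsCayleyTree n f) (hkn : k < n) :
    (∀ i, 1 ≤ i → i ≤ n → (f i = 0 ↔ i ≤ k)) ↔ blob n f ∈ codeInterval n k := by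
  constructor
  · intro h
    have hfk : f k = 0 := by
      rcases Nat.eq_zero_or_pos k with rfl | hk
      · exact hf.1
      · exact (h k hk hkn.le).2 le_rfl
    have hk := mem_weakRecords_of_apply_eq_zero hf.1 hfk
    have hbk : blob n f k ≤ k := hf.blob_eq_comp_advance ▸ hf.iterate_advance_le hk 0
    exact ⟨hf.isCode_blob, (hf.children_iff_zeros_blob hk).1 h, hbk⟩
  · rintro ⟨-, h, hbk⟩
    have hk : k ∈ weakRecords f := by
      rw [← hf.weakRecords_blob]
      rcases hbk.eq_or_lt with hfix | hlt
      · exact mem_weakRecords_of_apply_eq_self hfix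
      · exact mem_weakRecords_of_apply_mem hbk (mem_weakRecords_of_apply_eq_zero
          ((h 0 (by omega)).2 (by omega)) ((h _ (hlt.trans hkn)).2 hlt))
    exact (hf.children_iff_zeros_blob hk).2 h

/-! ### Counting -/

theorem ncard_setOf_forall_mem_and_eq_zero {ι α : Type*} [Zero α] (s : Finset ι)
    (t : ι → Finset α) :
    {b : ι → α | (∀ i ∈ s, b i ∈ t i) ∧ ∀ i ∉ s, b i = 0}.ncard = ∏ i ∈ s, (t i).card := by
  rw [← Finset.card_finsupp, ← Set.ncard_coe_finset,
    ← Set.ncard_image_of_injective _ (DFunLike.coe_injective (F := ι →₀ α))]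
  congr 1
  ext b
  simp only [Set.mem_image, Finset.mem_coe, Finset.mem_finsupp_iff]
  constructor
  · rintro ⟨hmem, hzero⟩
    have hsupp : ∀ i, b i ≠ 0 → i ∈ s := fun i => not_imp_comm.1 (hzero i)
    exact ⟨Finsupp.onFinset s b hsupp, ⟨Finsupp.support_onFinset_subset, hmem⟩, rfl⟩
  · rintro ⟨b, ⟨hsupp, hmem⟩, rfl⟩
    exact ⟨hmem, fun i hi => Finsupp.notMem_support_iff.1 fun h => hi (hsupp h)⟩

theorem ncard_codeInterval {n k : ℕ} (hkn : k < n) :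
    (codeInterval n k).ncard = k * n ^ (n - k - 1) := by
  have hletters : codeInterval n k = {b | (∀ i ∈ Finset.Ico k n,
      b i ∈ Finset.Icc 1 (if i = k then k else n)) ∧ ∀ i ∉ Finset.Ico k n, b i = 0} := by
    ext b
    simp only [codeInterval, IsCode, Set.mem_ofPred_eq, Finset.mem_Ico, Finset.mem_Icc]
    grind
  have hprod : ∏ i ∈ Finset.Ico (k + 1) n, (if i = k then k else n) = n ^ (n - k - 1) := by
    rw [Finset.prod_congr rfl fun i hi => if_neg (by grind), Finset.prod_const, Nat.card_Ico,
      Nat.sub_sub]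
  rw [hletters, ncard_setOf_forall_mem_and_eq_zero]
  simp only [Nat.card_Icc, Nat.add_sub_cancel]
  rw [Finset.prod_eq_prod_Ico_succ_bot hkn, if_pos rfl, hprod]

theorem ncard_setOf_isCayleyTree_and_children {n k : ℕ} (hkn : k < n) :
    {f : ℕ → ℕ | IsCayleyTree n f ∧ ∀ i, 1 ≤ i → i ≤ n → (f i = 0 ↔ i ≤ k)}.ncard =
      k * n ^ (n - k - 1) := by
  have htrees : {f : ℕ → ℕ | IsCayleyTree n f ∧ ∀ i, 1 ≤ i → i ≤ n → (f i = 0 ↔ i ≤ k)} =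
      {f | IsCayleyTree n f} ∩ blob n ⁻¹' codeInterval n k :=
    Set.ext fun f => and_congr_right fun hf => hf.children_iff_blob_mem_codeInterval hkn
  rw [htrees, ((blob_bijOn n).subset_right fun b hb => hb.1).ncard_eq, ncard_codeInterval hkn]

/-- The set of children of the root is exactly `{1,…,k}` iff the
record code lies between `0^{k-1}1^{n-k}` and `0^{k-1}k n^{n-k-1}` lexicographically
(equivalently: it is `0` at positions `≤ k-1`, between `1` and `k` at position `k`,
and `≥ 1` at positions `≥ k+1`); consequently there are `k·n^{n-k-1}` such trees. -/
theorem stmt4 (n k : ℕ) (hn : 2 ≤ n) (hk1 : 1 ≤ k) (hkn : k ≤ n - 1) :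
    (∀ f : ℕ → ℕ, IsCayleyTree n f →
      ((∀ i, 1 ≤ i → i ≤ n → (f i = 0 ↔ i ≤ k)) ↔
        ((∀ i, 1 ≤ i → i ≤ k - 1 → blob n f i = 0) ∧
          (1 ≤ blob n f k ∧ blob n f k ≤ k) ∧
          (∀ i, k + 1 ≤ i → i ≤ n - 1 → 1 ≤ blob n f i)))) ∧
    Set.ncard {f : ℕ → ℕ | IsCayleyTree n f ∧
        ∀ i, 1 ≤ i → i ≤ n → (f i = 0 ↔ i ≤ k)} = k * n ^ (n - k - 1) := by
  have hkn' : k < n := by omega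
  exact ⟨fun f hf => (hf.children_iff_blob_mem_codeInterval hkn').trans
    (mem_codeInterval_iff hf.isCode_blob hkn'), ncard_setOf_isCayleyTree_and_children hkn'⟩

end WearyParking
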